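/- Let s₀ > 1 be a real number, and let a, b, c, d be nonnegative integers with a > 0, c > 0, ad ≠ bc, and ad > bc. If either a^{s₀}·ζ(s₀) < c^{s₀} or 1 ≤ a < c·(1 − 1/s₀), then σ_s(an+b) < σ_s(cn+d) for every positive integer n and every real number s ≥ s₀. -/

import Mathlib

/-!
Write `m = a n + b` and `N = c n + d`. Since `b c < a d`, we have `m / N < a / c`.
Pairing each divisor with its complement gives `σ_s(m) = m^s ∑_{k ∣ m} k^{-s} ≤ m^s ζ(s₀)`
for `s ≥ s₀` (`sigmaR_le`), while `N^s ≤ σ_s(N)`. So it is enough that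
`(m / N)^s ζ(s₀) < 1`; as `m / N < a / c < 1`, this follows from `(a / c)^{s₀} ζ(s₀) < 1`,
which is the first alternative of the hypothesis.

The second alternative implies the first: `ζ(s₀) ≤ s₀ / (s₀ - 1)` (`zetaR_le`) and
`(a / c)^{s₀} ≤ a / c < (s₀ - 1) / s₀`.
-/

/-- `σ_s(n) = ∑_{d ∣ n} d^s` over the positive divisors of `n`. -/
noncomputable def sigmaR (s : ℝ) (n : ℕ) : ℝ := ∑ d ∈ n.divisors, (d : ℝ) ^ s

/-- `ζ(t) = ∑_{k=1}^∞ k^{-t}` for real `t`. -/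
noncomputable def zetaR (t : ℝ) : ℝ := ∑' k : ℕ, ((k : ℝ) + 1) ^ (-t)

lemma summable_zetaR {t : ℝ} (ht : 1 < t) :
    Summable fun k : ℕ => ((k : ℝ) + 1) ^ (-t) := by
  have h := (summable_nat_add_iff (f := fun k : ℕ => (k : ℝ) ^ (-t)) 1).2
    (Real.summable_nat_rpow.2 (by linarith))
  simpa using h

lemma one_le_zetaR {t : ℝ} (ht : 1 < t) : 1 ≤ zetaR t := by
  have h := (summable_zetaR ht).le_tsum 0 (fun k _ => by positivity)
  simpa [zetaR] using h

/-- Comparison of the zeta series with `1 + ∫_1^∞ x^{-t} dx`. -/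
lemma zetaR_le {t : ℝ} (ht : 1 < t) : zetaR t ≤ t / (t - 1) := by
  have h := ZetaAsymptotics.zeta_limit_aux1 ht
  have h0 : 0 ≤ ZetaAsymptotics.termTSum t :=
    tsum_nonneg fun n => ZetaAsymptotics.term_nonneg _ _
  have h1 : zetaR t = ∑' n : ℕ, 1 / ((n : ℝ) + 1) ^ t := by
    unfold zetaR
    refine tsum_congr fun n => ?_
    rw [Real.rpow_neg (by positivity), one_div]
  have h2 : t / (t - 1) = 1 + 1 / (t - 1) := by
    have : t - 1 ≠ 0 := by linarith
    field_simp
    ring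
  have h3 : 0 ≤ t * ZetaAsymptotics.termTSum t := by positivity
  rw [h1, h2]
  linarith

lemma sum_divisors_le_zetaR {t : ℝ} (ht : 1 < t) (m : ℕ) :
    ∑ k ∈ m.divisors, (k : ℝ) ^ (-t) ≤ zetaR t := by
  have hinj : Set.InjOn (fun k : ℕ => k - 1) (m.divisors : Set ℕ) := by
    intro x hx y hy hxy
    have hx' := Nat.pos_of_mem_divisors (Finset.mem_coe.1 hx)
    have hy' := Nat.pos_of_mem_divisors (Finset.mem_coe.1 hy)
    simp only at hxy
    omega
  have h := (summable_zetaR ht).sum_le_tsum (m.divisors.image fun k => k - 1)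
    (fun k _ => by positivity)
  rw [Finset.sum_image hinj] at h
  refine le_trans (le_of_eq (Finset.sum_congr rfl fun k hk => ?_)) h
  have hk' : 1 ≤ k := Nat.pos_of_mem_divisors hk
  simp only [Nat.cast_sub hk', Nat.cast_one, sub_add_cancel]

lemma sigmaR_le {s₀ s : ℝ} (hs₀ : 1 < s₀) (hs : s₀ ≤ s) (m : ℕ) :
    sigmaR s m ≤ (m : ℝ) ^ s * zetaR s₀ := by
  have h : sigmaR s m = ∑ k ∈ m.divisors, (m : ℝ) ^ s * (k : ℝ) ^ (-s) := by
    unfold sigmaR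
    rw [← Nat.sum_div_divisors m fun k => (k : ℝ) ^ s]
    refine Finset.sum_congr rfl fun k hk => ?_
    have hk0 : (k : ℝ) ≠ 0 := by exact_mod_cast (Nat.pos_of_mem_divisors hk).ne'
    rw [Nat.cast_div (Nat.dvd_of_mem_divisors hk) hk0,
      Real.div_rpow (by positivity) (by positivity), Real.rpow_neg (by positivity),
      div_eq_mul_inv]
  rw [h, ← Finset.mul_sum]
  refine mul_le_mul_of_nonneg_left ?_ (by positivity)
  refine le_trans (Finset.sum_le_sum fun k hk => ?_) (sum_divisors_le_zetaR hs₀ m)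
  have hk1 : (1 : ℝ) ≤ k := by exact_mod_cast Nat.pos_of_mem_divisors hk
  exact Real.rpow_le_rpow_of_exponent_le hk1 (by linarith)

lemma rpow_le_sigmaR (s : ℝ) {m : ℕ} (hm : m ≠ 0) : (m : ℝ) ^ s ≤ sigmaR s m :=
  Finset.single_le_sum (f := fun k : ℕ => (k : ℝ) ^ s) (fun k _ => by positivity)
    (Nat.mem_divisors_self m hm)

theorem stmt_13 (s₀ : ℝ) (hs₀ : 1 < s₀) (a b c d : ℕ)
    (ha : 0 < a) (hc : 0 < c) (habcd : a * d > b * c)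
    (hyp : (a : ℝ) ^ s₀ * zetaR s₀ < (c : ℝ) ^ s₀ ∨
           (1 ≤ a ∧ (a : ℝ) < (c : ℝ) * (1 - 1 / s₀))) :
    ∀ n : ℕ, 0 < n → ∀ s : ℝ, s₀ ≤ s →
      sigmaR s (a * n + b) < sigmaR s (c * n + d) := by
  intro n hn s hs
  have haR : (0 : ℝ) < a := by exact_mod_cast ha
  have hcR : (0 : ℝ) < c := by exact_mod_cast hc
  have hs0 : 0 < s₀ := by linarith
  have hZ1 := one_le_zetaR hs₀
  have hZ : 0 < zetaR s₀ := by linarith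
  have key : ((a : ℝ) / c) ^ s₀ * zetaR s₀ < 1 := by
    rcases hyp with h | ⟨-, h⟩
    · rw [Real.div_rpow haR.le hcR.le, div_mul_eq_mul_div, div_lt_one (by positivity)]
      exact h
    · have hr : (a : ℝ) / c < 1 - 1 / s₀ := by
        rw [div_lt_iff₀ hcR]
        linarith
      have hr1 : (a : ℝ) / c ≤ 1 := by
        have : 0 < 1 / s₀ := by positivity
        linarith
      have hpow : ((a : ℝ) / c) ^ s₀ ≤ (a : ℝ) / c := by
        simpa using Real.rpow_le_rpow_of_exponent_ge (by positivity) hr1 hs₀.le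
      calc ((a : ℝ) / c) ^ s₀ * zetaR s₀ < (1 - 1 / s₀) * zetaR s₀ :=
            mul_lt_mul_of_pos_right (hpow.trans_lt hr) hZ
        _ ≤ (1 - 1 / s₀) * (s₀ / (s₀ - 1)) :=
            mul_le_mul_of_nonneg_left (zetaR_le hs₀)
              (le_trans (by positivity) hr.le)
        _ = 1 := by
            have : s₀ - 1 ≠ 0 := by linarith
            field_simp
  have hac : (a : ℝ) / c < 1 := by
    by_contra! h
    have h1 := Real.one_le_rpow h hs0.le
    nlinarith
  set m := a * n + b with hm
  set N := c * n + d with hN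
  have hN0 : 0 < N := by positivity
  have hm0 : 0 < m := by positivity
  have hNR : (0 : ℝ) < N := by exact_mod_cast hN0
  have hmR : (0 : ℝ) < m := by exact_mod_cast hm0
  have hx : (m : ℝ) / N < a / c := by
    rw [div_lt_div_iff₀ hNR hcR]
    have : m * c < a * N := by
      rw [hm, hN]
      nlinarith
    exact_mod_cast this
  have hxs : ((m : ℝ) / N) ^ s ≤ ((a : ℝ) / c) ^ s₀ :=
    (Real.rpow_le_rpow_of_exponent_ge (by positivity) (hx.trans hac).le hs).trans
      (Real.rpow_le_rpow (by positivity) hx.le hs0.le)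
  have hlt : ((m : ℝ) / N) ^ s * zetaR s₀ < 1 :=
    (mul_le_mul_of_nonneg_right hxs hZ.le).trans_lt key
  rw [Real.div_rpow hmR.le hNR.le, div_mul_eq_mul_div, div_lt_one (by positivity)] at hlt
  exact (sigmaR_le hs₀ hs m).trans_lt (hlt.trans_le (rpow_le_sigmaR s hN0.ne'))
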